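/- Let A be a pca with an effectively pca-valued partial numbering γ : ω ⇀ A. Given an embedding of pcas f : λη ↪ A or f : λ ↪ A, there exist an element a ∈ A and a total computable function d : ω → ω such that for all n ∈ ω, d(n) ∈ dom(γ), and γ(d(n)) = a if and only if n ∈ K (the halting set). -/

import Mathlib

namespace PCAEmb

/-! ### Oracle computability -/

/-- Codes for partial functions computable relative to an oracle. -/
inductive OCode : Type
  | zero : OCode
  | succ : OCode
  | left : OCode
  | right : OCode
  | oracle : OCode
  | pair : OCode → OCode → OCode
  | comp : OCode → OCode → OCode
  | prec : OCode → OCode → OCode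
  | rfind' : OCode → OCode

/-- Evaluation of an oracle code, relative to a (partial) oracle `O`. -/
def evalo (O : ℕ →. ℕ) : OCode → ℕ →. ℕ
  | .zero => pure 0
  | .succ => Nat.succ
  | .left => ↑fun n : ℕ => n.unpair.1
  | .right => ↑fun n : ℕ => n.unpair.2
  | .oracle => O
  | .pair cf cg => fun n => Nat.pair <$> evalo O cf n <*> evalo O cg n
  | .comp cf cg => fun n => evalo O cg n >>= evalo O cf
  | .prec cf cg =>
      Nat.unpaired fun a n =>
        n.rec (evalo O cf a) fun y IH => do
          let i ← IH
          evalo O cg (Nat.pair a (Nat.pair y i))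
  | .rfind' cf =>
      Nat.unpaired fun a m =>
        (Nat.rfind fun n => (fun x => x = 0) <$> evalo O cf (Nat.pair a (n + m))).map (· + m)

/-- The standard numbering of oracle codes. -/
def OCode.ofNat : ℕ → OCode
  | 0 => .zero
  | 1 => .succ
  | 2 => .left
  | 3 => .right
  | 4 => .oracle
  | n + 5 =>
    match n % 4 with
    | 0 => .pair (OCode.ofNat (n / 4).unpair.1) (OCode.ofNat (n / 4).unpair.2)
    | 1 => .comp (OCode.ofNat (n / 4).unpair.1) (OCode.ofNat (n / 4).unpair.2)
    | 2 => .prec (OCode.ofNat (n / 4).unpair.1) (OCode.ofNat (n / 4).unpair.2)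
    | _ => .rfind' (OCode.ofNat (n / 4).unpair.1)
  decreasing_by
    all_goals
      have h1 := Nat.unpair_left_le (n / 4)
      have h2 := Nat.unpair_right_le (n / 4)
      have h3 := Nat.div_le_self n 4
      omega

/-- The `e`-th Turing functional with oracle `O` : `Φ_e^O`. -/
def phi (O : ℕ →. ℕ) (e : ℕ) : ℕ →. ℕ := evalo O (OCode.ofNat e)

/-- The characteristic function of a set of naturals, as a (total) partial function. -/
noncomputable def chi (X : Set ℕ) : ℕ →. ℕ :=
  fun n => Part.some (X.indicator (fun _ => 1) n)

/-- `ψ` is partial computable relative to the oracle `O`. -/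
def RecursiveIn (O : ℕ →. ℕ) (ψ : ℕ →. ℕ) : Prop := ∃ c : OCode, evalo O c = ψ

/-- Turing reducibility of sets of naturals. -/
def TuringLE (X Y : Set ℕ) : Prop := RecursiveIn (chi Y) (chi X)

/-- A total function `d : ℕ → ℕ` is `Y`-computable. -/
def ComputableIn (Y : Set ℕ) (d : ℕ → ℕ) : Prop :=
  RecursiveIn (chi Y) (fun n => Part.some (d n))

/-- A binary relation on `ℕ` is `Y`-c.e. -/
def CEIn (Y : Set ℕ) (R : ℕ → ℕ → Prop) : Prop :=
  ∃ c : OCode, ∀ n m, R n m ↔ (evalo (chi Y) c (Nat.pair n m)).Dom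

/-- A set `W ⊆ ℕ` is `Y`-c.e. -/
def CE1In (Y : Set ℕ) (W : Set ℕ) : Prop :=
  ∃ c : OCode, ∀ n, n ∈ W ↔ (evalo (chi Y) c n).Dom

/-- The canonical finite set `D_u` with code `u` (binary coding). -/
def Du (u : ℕ) : Set ℕ := {k | u.testBit k}

/-- Enumeration reducibility: `Z ≤ₑ Y`. -/
def EnumLE (Z Y : Set ℕ) : Prop :=
  ∃ W : Set ℕ, CE1In ∅ W ∧ ∀ x, x ∈ Z ↔ ∃ u, Nat.pair x u ∈ W ∧ Du u ⊆ Y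

/-- The Turing jump `X'` of a set `X`. -/
def jump (X : Set ℕ) : Set ℕ := {e | (phi (chi X) e e).Dom}

/-- The halting set `K = {e : φ_e(e)↓}`. -/
def Khalt : Set ℕ := jump ∅

/-! ### Partial combinatory algebras -/

/-- `k·a·b` as a partial element. -/
def app2 {α : Type*} (app : α → α → Part α) (a b c : α) : Part α :=
  (app a b).bind fun x => app x c

/-- `s·a·b·c` as a partial element. -/
def app3 {α : Type*} (app : α → α → Part α) (a b c d : α) : Part α :=
  (app2 app a b c).bind fun x => app x d

/-- A partial applicative structure is a pca if it has (distinct) combinators `s` and `k`. -/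
def IsPCA {α : Type*} (app : α → α → Part α) : Prop :=
  ∃ s k : α, s ≠ k ∧
    (∀ a b : α, app2 app k a b = Part.some a) ∧
    (∀ a b : α, (app2 app s a b).Dom) ∧
    (∀ a b c : α,
      app3 app s a b c = (app a c).bind fun x => (app b c).bind fun y => app x y)

/-- An embedding of partial combinatory algebras: an injection that preserves
(defined) application. -/
def IsPCAEmbedding {α β : Type*} (appA : α → α → Part α) (appB : β → β → Part β)
    (f : α → β) : Prop :=
  Function.Injective f ∧ ∀ a a' c : α, c ∈ appA a a' → f c ∈ appB (f a) (f a')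

/-! ### Partial numberings -/

/-- `γ : ℕ ⇀ α` is a partial numbering (i.e. surjective). -/
def IsNumbering {α : Type*} (γ : ℕ →. α) : Prop := ∀ a : α, ∃ n, a ∈ γ n

/-- `d` is an `(a⊥, a⊤)`-decider for `X` with respect to `γ`. -/
def IsDecider {α : Type*} (γ : ℕ →. α) (abot atop : α) (X : Set ℕ) (d : ℕ → ℕ) : Prop :=
  ∀ n, (n ∉ X → γ (d n) = Part.some abot) ∧ (n ∈ X → γ (d n) = Part.some atop)

/-- `γ` has `Y`-c.e. inequivalence. -/
def CEInequiv {α : Type*} (Y : Set ℕ) (γ : ℕ →. α) : Prop :=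
  ∃ R : ℕ → ℕ → Prop, CEIn Y R ∧
    ∀ n m, (γ n).Dom → (γ m).Dom → (R n m ↔ γ n ≠ γ m)

/-- `γ` is a `Y`-effectively pca-valued partial numbering: the application is
represented on codes by a partial `Y`-computable function `ψ`. -/
def EffValued {α : Type*} (Y : Set ℕ) (app : α → α → Part α) (γ : ℕ →. α) : Prop :=
  ∃ ψ : ℕ →. ℕ, RecursiveIn (chi Y) ψ ∧
    ∀ (n m : ℕ) (a b c : α), a ∈ γ n → b ∈ γ m → c ∈ app a b →
      ∃ j, j ∈ ψ (Nat.pair n m) ∧ c ∈ γ j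

/-- `γ` is a strongly `Y`-effectively pca-valued partial numbering. -/
def StrongEffValued {α : Type*} (Y : Set ℕ) (app : α → α → Part α) (γ : ℕ →. α) : Prop :=
  ∃ ψ : ℕ →. ℕ, RecursiveIn (chi Y) ψ ∧
    (∀ (n m : ℕ) (a b c : α), a ∈ γ n → b ∈ γ m → c ∈ app a b →
      ∃ j, j ∈ ψ (Nat.pair n m) ∧ c ∈ γ j) ∧
    (∀ (n m k l : ℕ) (a b a' b' c : α), a ∈ γ n → b ∈ γ m → a' ∈ γ k → b' ∈ γ l →
      c ∈ app a b → c ∈ app a' b' → ψ (Nat.pair n m) = ψ (Nat.pair k l))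

/-! ### The models -/

/-- Kleene's first model relativized to `X`: application `n · m = Φ_n^X(m)`. -/
noncomputable def k1App (X : Set ℕ) : ℕ → ℕ → Part ℕ := fun n m => phi (chi X) n m

/-- A total function as a partial function. -/
def toPFun (g : ℕ → ℕ) : ℕ →. ℕ := fun n => Part.some (g n)

/-- Join `f ⊕ g` of two partial functions. -/
def pjoin (f g : ℕ →. ℕ) : ℕ →. ℕ := fun n =>
  if n % 2 = 0 then f (n / 2) else g (n / 2)

/-- The totalization of a partial function, as a partial element of `ℕ → ℕ`:
defined iff `ψ` is total. -/
def partToTotal (ψ : ℕ →. ℕ) : Part (ℕ → ℕ) :=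
  ⟨∀ n, (ψ n).Dom, fun H n => (ψ n).get (H n)⟩

/-- Application in Kleene's second model `K₂`: `g · h = Φ^{g⊕h}_{g 0}`,
defined iff this function is total. -/
def k2App (g h : ℕ → ℕ) : Part (ℕ → ℕ) :=
  partToTotal (phi (pjoin (toPFun g) (toPFun h)) (g 0))

/-- Application in van Oosten's sequential model `B`: `θ · ρ = Φ^{θ⊕ρ}_{θ 0}`
(always defined, as a partial function). -/
def bApp (θ ρ : ℕ →. ℕ) : Part (ℕ →. ℕ) :=
  Part.some (fun n => (θ 0).bind fun e => phi (pjoin θ ρ) e n)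

/-- Restriction of a partial applicative structure to a subset. -/
def subApp {α : Type*} (app : α → α → Part α) (P : α → Prop)
    (a b : Subtype P) : Part (Subtype P) :=
  (app a.1 b.1).bind fun c => Part.assert (P c) fun h => Part.some ⟨c, h⟩

/-- Carrier of `K₂^X` : the total `X`-computable functions. -/
def K2el (X : Set ℕ) : Type := {g : ℕ → ℕ // RecursiveIn (chi X) (toPFun g)}

/-- Application in `K₂^X`. -/
def k2XApp (X : Set ℕ) : K2el X → K2el X → Part (K2el X) :=
  subApp k2App _

/-- Carrier of `B^X` : the partial `X`-computable functions. -/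
def Bel (X : Set ℕ) : Type := {θ : ℕ →. ℕ // RecursiveIn (chi X) θ}

/-- Application in `B^X`. -/
def bXApp (X : Set ℕ) : Bel X → Bel X → Part (Bel X) :=
  subApp bApp _

/-- Application in Scott's graph model `G`. -/
def gApp (A B : Set ℕ) : Part (Set ℕ) :=
  Part.some {n | ∃ u, Nat.pair n u ∈ A ∧ Du u ⊆ B}

/-- Carrier of `G^Z` : the sets enumeration-reducible to `Z`. -/
def Gel (Z : Set ℕ) : Type := {A : Set ℕ // EnumLE A Z}

/-- Application in `G^Z`. -/
def gXApp (Z : Set ℕ) : Gel Z → Gel Z → Part (Gel Z) :=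
  subApp gApp _

/-- `X ⊕ X̄ = {2n : n ∈ X} ∪ {2n+1 : n ∉ X}`. -/
def joinCompl (X : Set ℕ) : Set ℕ :=
  {k | ∃ n, (k = 2 * n ∧ n ∈ X) ∨ (k = 2 * n + 1 ∧ n ∉ X)}

/-! ### The λ-calculus -/

/-- Untyped λ-terms (de Bruijn representation). -/
inductive Lam : Type
  | var : ℕ → Lam
  | app : Lam → Lam → Lam
  | abs : Lam → Lam

/-- Lift (shift up) the free variables `≥ d` of a term. -/
def Lam.lift : Lam → ℕ → Lam
  | .var n, d => if n < d then .var n else .var (n + 1)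
  | .app M N, d => .app (M.lift d) (N.lift d)
  | .abs M, d => .abs (M.lift (d + 1))

/-- Substitution `M[k := N]` (de Bruijn). -/
def Lam.subst : Lam → ℕ → Lam → Lam
  | .var n, k, N => if n = k then N else if k < n then .var (n - 1) else .var n
  | .app M M', k, N => .app (M.subst k N) (M'.subst k N)
  | .abs M, k, N => .abs (M.subst (k + 1) (N.lift 0))

/-- β-equivalence of λ-terms. -/
inductive BetaEq : Lam → Lam → Prop
  | beta (M N : Lam) : BetaEq (.app (.abs M) N) (M.subst 0 N)
  | refl (M : Lam) : BetaEq M M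
  | symm {M N : Lam} : BetaEq M N → BetaEq N M
  | trans {M N P : Lam} : BetaEq M N → BetaEq N P → BetaEq M P
  | appCongr {M M' N N' : Lam} :
      BetaEq M M' → BetaEq N N' → BetaEq (.app M N) (.app M' N')
  | absCongr {M M' : Lam} : BetaEq M M' → BetaEq (.abs M) (.abs M')

/-- βη-equivalence of λ-terms. -/
inductive BetaEtaEq : Lam → Lam → Prop
  | beta (M N : Lam) : BetaEtaEq (.app (.abs M) N) (M.subst 0 N)
  | eta (M : Lam) : BetaEtaEq (.abs (.app (M.lift 0) (.var 0))) M
  | refl (M : Lam) : BetaEtaEq M M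
  | symm {M N : Lam} : BetaEtaEq M N → BetaEtaEq N M
  | trans {M N P : Lam} : BetaEtaEq M N → BetaEtaEq N P → BetaEtaEq M P
  | appCongr {M M' N N' : Lam} :
      BetaEtaEq M M' → BetaEtaEq N N' → BetaEtaEq (.app M N) (.app M' N')
  | absCongr {M M' : Lam} : BetaEtaEq M M' → BetaEtaEq (.abs M) (.abs M')

def lamBetaSetoid : Setoid Lam := ⟨BetaEq, ⟨BetaEq.refl, BetaEq.symm, BetaEq.trans⟩⟩

def lamBetaEtaSetoid : Setoid Lam :=
  ⟨BetaEtaEq, ⟨BetaEtaEq.refl, BetaEtaEq.symm, BetaEtaEq.trans⟩⟩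

/-- The pca `λ` of λ-terms modulo β-equivalence. -/
def LamBeta : Type := Quotient lamBetaSetoid

/-- The pca `λη` of λ-terms modulo βη-equivalence. -/
def LamBetaEta : Type := Quotient lamBetaEtaSetoid

/-- Application in `λ` (total). -/
def lamBetaApp : LamBeta → LamBeta → Part LamBeta := fun a b =>
  Part.some (Quotient.map₂ Lam.app (fun _ _ h1 _ _ h2 => BetaEq.appCongr h1 h2) a b)

/-- Application in `λη` (total). -/
def lamBetaEtaApp : LamBetaEta → LamBetaEta → Part LamBetaEta := fun a b =>
  Part.some (Quotient.map₂ Lam.app (fun _ _ h1 _ _ h2 => BetaEtaEq.appCongr h1 h2) a b)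

/-! For a computably enumerable set `W` there is a closed term `e` such that, in any combinatory
algebra mapping to the filter model below, `e ⬝ num n = k` if and only if `n ∈ W`. The term searches
for a stage at which `n` enters `W`. A successful search has the value `k` in every combinatory
algebra. The value of an unsuccessful one is not determined by the combinatory laws, but in the
filter model of intersection types, which is extensional and hence interprets `λη`, it is the empty
filter, whereas `k` is not.

The search proceeds by self-application: it is a term `T ⬝ T ⬝ num 0`, where, as long as it is
unsuccessful, `T ⬝ x ⬝ num t = x ⬝ x ⬝ num (t + 1)` for all `x`. Let `P` be the largest filter
annihilating all numerals. If the search fails, then `T ⬝ x ≤ P` whenever `x ⬝ x ≤ P`, and induction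
on the finite approximations of `T` gives `T ⬝ T ≤ P`.

In a pca with an effectively pca-valued numbering the indices of `f (num n)`, and hence of
`f (e ⬝ num n)`, can be computed from `n`. As `f` is injective, `f (e ⬝ num n) = f k` if and only
if `n ∈ W`. -/

/-! ### Combinatory algebras and functional completeness -/

/-- A total applicative structure. -/
class ApplicativeStructure (C : Type*) where
  ap : C → C → C

local infixl:70 " ⬝ " => ApplicativeStructure.ap

/-- A combinatory algebra: a total applicative structure with chosen combinators `s` and `k`, which
may coincide (so the one-point algebra is allowed). -/
class CombinatoryAlgebra (C : Type*) extends ApplicativeStructure C where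
  s : C
  k : C
  k_ap (a b : C) : k ⬝ a ⬝ b = a
  s_ap (a b c : C) : s ⬝ a ⬝ b ⬝ c = a ⬝ c ⬝ (b ⬝ c)

open CombinatoryAlgebra (s k k_ap s_ap)

/-- Morphisms of combinatory algebras; unlike the embeddings `IsPCAEmbedding` they need not be
injective, but they preserve the chosen combinators. -/
structure CombinatoryAlgebra.Hom (C D : Type*) [CombinatoryAlgebra C] [CombinatoryAlgebra D] where
  toFun : C → D
  map_ap (x y : C) : toFun (x ⬝ y) = toFun x ⬝ toFun y
  map_s : toFun s = s
  map_k : toFun k = k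

/-- Combinatory terms with variables `var 0, …, var (n - 1)`, numbered as de Bruijn indices:
`var 0` is the variable that `Term.lam` abstracts. Closed terms are those of `Term 0`. -/
inductive Term (n : ℕ) : Type
  | S : Term n
  | K : Term n
  | var : Fin n → Term n
  | ap : Term n → Term n → Term n

namespace Term

instance (n : ℕ) : ApplicativeStructure (Term n) := ⟨Term.ap⟩

variable {n : ℕ} {C D : Type*} [CombinatoryAlgebra C] [CombinatoryAlgebra D]

/-- The value of a combinatory term under an assignment of its variables. -/
def eval (ρ : Fin n → C) : Term n → C
  | S => s
  | K => k
  | var i => ρ i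
  | ap p q => eval ρ p ⬝ eval ρ q

@[simp] theorem eval_S (ρ : Fin n → C) : eval ρ S = s := rfl

@[simp] theorem eval_K (ρ : Fin n → C) : eval ρ K = k := rfl

@[simp] theorem eval_var (ρ : Fin n → C) (i : Fin n) : eval ρ (var i) = ρ i := rfl

@[simp] theorem eval_ap (ρ : Fin n → C) (p q : Term n) : eval ρ (p ⬝ q) = eval ρ p ⬝ eval ρ q := rfl

/-- Bracket abstraction `λ* x₀. p` of the variable `var 0`. -/
def lam : Term (n + 1) → Term n
  | S => K ⬝ S
  | K => K ⬝ K
  | var i => Fin.cases (S ⬝ K ⬝ K) (fun j => K ⬝ var j) i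
  | ap p q => S ⬝ lam p ⬝ lam q

@[simp] theorem eval_lam_ap (ρ : Fin n → C) (p : Term (n + 1)) (x : C) :
    eval ρ (lam p) ⬝ x = eval (Matrix.vecCons x ρ) p := by
  induction p with
  | S => simp only [lam, eval_ap, eval_S, eval_K, k_ap]
  | K => simp only [lam, eval_ap, eval_K, k_ap]
  | var i => cases i using Fin.cases <;> simp [lam, k_ap, s_ap]
  | ap p q ihp ihq => simp only [lam, eval, eval_ap, s_ap, ihp, ihq]

/-- The element of a combinatory algebra denoted by a closed term. -/
def val (C : Type*) [CombinatoryAlgebra C] (p : Term 0) : C := eval ![] p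

/-- A closed term viewed as a term in more variables. -/
@[coe] def weaken : Term 0 → Term n
  | S => S
  | K => K
  | ap p q => weaken p ⬝ weaken q

instance : Coe (Term 0) (Term n) := ⟨weaken⟩

@[simp] theorem eval_weaken (ρ : Fin n → C) (p : Term 0) : eval ρ (p : Term n) = val C p := by
  induction p with
  | S | K => rfl
  | var i => exact i.elim0
  | ap p q ihp ihq => exact congrArg₂ (· ⬝ ·) ihp ihq

theorem map_val (F : CombinatoryAlgebra.Hom C D) (p : Term 0) : F.toFun (val C p) = val D p := by
  induction p with
  | S => exact F.map_s
  | K => exact F.map_k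
  | var i => exact i.elim0
  | ap p q ihp ihq => exact (F.map_ap _ _).trans (congrArg₂ (· ⬝ ·) ihp ihq)

/-! ### Numerals and representable functions -/

/-- The Church numeral `0`. -/
def zero : Term 0 := (var 0).lam.lam

/-- The successor function of Church numerals. -/
def succ : Term 0 := (var 1 ⬝ (var 2 ⬝ var 1 ⬝ var 0)).lam.lam.lam

/-- The pairing combinator. -/
def pair : Term 0 := (var 0 ⬝ var 2 ⬝ var 1).lam.lam.lam

/-- The first projection. -/
def fst : Term 0 := (var 0 ⬝ K).lam

/-- The second projection. -/
def snd : Term 0 := (var 0 ⬝ ↑zero : Term 1).lam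

theorem val_zero_ap (f x : C) : val C zero ⬝ f ⬝ x = x := by
  simp [val, zero]

theorem val_succ_ap (a f x : C) : val C succ ⬝ a ⬝ f ⬝ x = f ⬝ (a ⬝ f ⬝ x) := by
  simp [val, succ]

theorem val_fst_pair (x y : C) : val C fst ⬝ (val C pair ⬝ x ⬝ y) = x := by
  simp [val, fst, pair, k_ap]

theorem val_snd_pair (x y : C) : val C snd ⬝ (val C pair ⬝ x ⬝ y) = y := by
  rw [val, snd, val.eq_1 _ pair, pair]
  simp [val_zero_ap]

end Term

open Term

/-- Church numerals. -/
def num (C : Type*) [CombinatoryAlgebra C] : ℕ → C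
  | 0 => val C zero
  | n + 1 => val C succ ⬝ num C n

/-- A list of numbers as nested pairs of numerals, ended by `k`. -/
def tuple (C : Type*) [CombinatoryAlgebra C] : List ℕ → C
  | [] => k
  | m :: l => val C pair ⬝ num C m ⬝ tuple C l

section Numerals

variable {C D : Type*} [CombinatoryAlgebra C] [CombinatoryAlgebra D]

theorem map_num (F : CombinatoryAlgebra.Hom C D) (n : ℕ) : F.toFun (num C n) = num D n := by
  induction n with
  | zero => exact map_val F zero
  | succ n ih => simp only [num, F.map_ap, ih, map_val]

theorem num_ap (n : ℕ) (f x : C) : num C n ⬝ f ⬝ x = (f ⬝ ·)^[n] x := by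
  induction n with
  | zero => exact val_zero_ap f x
  | succ n ih => rw [num, val_succ_ap, ih, Function.iterate_succ_apply']

/-- Gödel's recursor, obtained by iterating `(m, y) ↦ (m + 1, f m y)`. -/
def recursor : Term 0 :=
  let step : Term 4 := ↑pair ⬝ (↑succ ⬝ (↑fst ⬝ var 0)) ⬝ (var 2 ⬝ (↑fst ⬝ var 0) ⬝ (↑snd ⬝ var 0))
  (↑snd ⬝ (var 0 ⬝ step.lam ⬝ (↑pair ⬝ ↑zero ⬝ var 2)) : Term 3).lam.lam.lam

theorem recursor_ap_num (x f : C) (n : ℕ) :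
    val C recursor ⬝ x ⬝ f ⬝ num C n = n.rec x fun m y => f ⬝ num C m ⬝ y := by
  let step (y : C) := val C pair ⬝ (val C succ ⬝ (val C fst ⬝ y)) ⬝
    (f ⬝ (val C fst ⬝ y) ⬝ (val C snd ⬝ y))
  have iterate_step : step^[n] (val C pair ⬝ val C zero ⬝ x) =
      val C pair ⬝ num C n ⬝ (n.rec x fun m y => f ⬝ num C m ⬝ y) := by
    induction n with
    | zero => rfl
    | succ n ih =>
      rw [Function.iterate_succ_apply', ih]
      simp only [step, val_fst_pair, val_snd_pair, num]
  calc val C recursor ⬝ x ⬝ f ⬝ num C n = val C snd ⬝ step^[n] (val C pair ⬝ val C zero ⬝ x) := by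
        rw [val, recursor]; simp [num_ap, step]
    _ = n.rec x fun m y => f ⬝ num C m ⬝ y := by rw [iterate_step, val_snd_pair]

end Numerals

/-- The functions represented by closed terms on numerals, uniformly in all combinatory algebras;
the arguments are passed as one `tuple`. -/
def Representable {n : ℕ} (f : List.Vector ℕ n → ℕ) : Prop :=
  ∃ e : Term 0, ∀ (C : Type) [CombinatoryAlgebra C] (v : List.Vector ℕ n),
    val C e ⬝ tuple C v.toList = num C (f v)

theorem Representable.get {n : ℕ} (i : Fin n) : Representable fun v => v.get i := by
  induction n with
  | zero => exact i.elim0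
  | succ n ih =>
    cases i using Fin.cases with
    | zero =>
      refine ⟨fst, fun C _ v => ?_⟩
      obtain ⟨m, w, rfl⟩ := v.exists_eq_cons
      exact val_fst_pair _ _
    | succ i =>
      obtain ⟨e, he⟩ := ih i
      refine ⟨(↑e ⬝ (↑snd ⬝ var 0) : Term 1).lam, fun C _ v => ?_⟩
      obtain ⟨m, w, rfl⟩ := v.exists_eq_cons
      rw [val]
      simp [tuple, val_snd_pair, he]

theorem exists_val_ap_eq_tuple_ofFn {n m : ℕ} {g : Fin m → List.Vector ℕ n → ℕ}
    (hg : ∀ i, Representable (g i)) :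
    ∃ e : Term 0, ∀ (C : Type) [CombinatoryAlgebra C] (v : List.Vector ℕ n),
      val C e ⬝ tuple C v.toList = tuple C (List.Vector.ofFn fun i => g i v).toList := by
  induction m with
  | zero => exact ⟨K ⬝ K, fun C _ v => k_ap _ _⟩
  | succ m ih =>
    obtain ⟨e, he⟩ := hg 0
    obtain ⟨es, hes⟩ := ih fun i => hg i.succ
    refine ⟨(↑pair ⬝ (↑e ⬝ var 0) ⬝ (↑es ⬝ var 0) : Term 1).lam, fun C _ v => ?_⟩
    rw [val]
    simp [tuple, he, hes, List.Vector.ofFn]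

theorem Representable.comp {n m : ℕ} {f : List.Vector ℕ m → ℕ} {g : Fin m → List.Vector ℕ n → ℕ}
    (hf : Representable f) (hg : ∀ i, Representable (g i)) :
    Representable fun v => f (List.Vector.ofFn fun i => g i v) := by
  obtain ⟨e, he⟩ := hf
  obtain ⟨es, hes⟩ := exists_val_ap_eq_tuple_ofFn hg
  refine ⟨(↑e ⬝ (↑es ⬝ var 0) : Term 1).lam, fun C _ v => ?_⟩
  rw [val, ← he]
  simp only [eval_lam_ap, eval_ap, eval_weaken, eval_var, Matrix.cons_val_zero, hes]

theorem Representable.prec {n : ℕ} {f : List.Vector ℕ n → ℕ} {g : List.Vector ℕ (n + 2) → ℕ}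
    (hf : Representable f) (hg : Representable g) :
    Representable fun v : List.Vector ℕ (n + 1) =>
      v.head.rec (f v.tail) fun y z => g (y ::ᵥ z ::ᵥ v.tail) := by
  obtain ⟨e, he⟩ := hf
  obtain ⟨e', he'⟩ := hg
  let step : Term 3 := ↑e' ⬝ (↑pair ⬝ var 1 ⬝ (↑pair ⬝ var 0 ⬝ (↑snd ⬝ var 2)))
  refine ⟨(↑recursor ⬝ (↑e ⬝ (↑snd ⬝ var 0)) ⬝ step.lam.lam ⬝ (↑fst ⬝ var 0) : Term 1).lam,
    fun C _ v => ?_⟩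
  obtain ⟨m, w, rfl⟩ := v.exists_eq_cons
  have eval_step (y z : ℕ) : eval ![num C z, num C y, tuple C (m ::ᵥ w).toList] step =
      num C (g (y ::ᵥ z ::ᵥ w)) := by
    simp [step, ← he', tuple, val_snd_pair]
  have rec_eq (i : ℕ) :
      (i.rec (num C (f w)) fun y x => eval ![x, num C y, tuple C (m ::ᵥ w).toList] step) =
        num C (i.rec (f w) fun y z => g (y ::ᵥ z ::ᵥ w)) := by
    induction i with
    | zero => rfl
    | succ i ih => exact (congrArg (eval ![·, _, _] step) ih).trans (eval_step i _)
  rw [val]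
  simpa [tuple, val_fst_pair, val_snd_pair, recursor_ap_num, he] using rec_eq m

theorem Representable.of_primrec {n : ℕ} {f : List.Vector ℕ n → ℕ} (hf : Nat.Primrec' f) :
    Representable f := by
  induction hf with
  | zero => exact ⟨K ⬝ zero, fun C _ v => k_ap _ _⟩
  | succ =>
    refine ⟨(↑succ ⬝ (↑fst ⬝ var 0) : Term 1).lam, fun C _ v => ?_⟩
    obtain ⟨m, w, rfl⟩ := v.exists_eq_cons
    rw [val]
    simp [tuple, num, val_fst_pair]
  | get i => exact .get i
  | comp g _ _ ihf ihg => exact ihf.comp ihg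
  | prec _ _ ihf ihg => exact ihf.prec ihg

/-! ### Self-applicative search -/

/-- Applied to itself, such a `T` searches for `t ≥ 0` with `g t ≠ 0`: the value at `t` is `k` if
`g t ≠ 0`, and the value at `t + 1` if `g t = 0`. -/
def Searches {C : Type*} [CombinatoryAlgebra C] (T : C) (g : ℕ → ℕ) : Prop :=
  ∀ x t, T ⬝ x ⬝ num C t = num C (g t) ⬝ (k ⬝ k) ⬝ (x ⬝ x ⬝ num C (t + 1))

theorem Searches.self_ap_num_eq_k {C : Type*} [CombinatoryAlgebra C] {T : C} {g : ℕ → ℕ}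
    (hT : Searches T g) {t : ℕ} (ht : g t ≠ 0) : T ⬝ T ⬝ num C 0 = k := by
  suffices ∀ i ≤ t, T ⬝ T ⬝ num C i = k from this 0 t.zero_le
  intro i hi
  induction hi using Nat.decreasingInduction with
  | self =>
    obtain ⟨m, hm⟩ := Nat.exists_eq_succ_of_ne_zero ht
    rw [hT, hm, num, val_succ_ap, k_ap]
  | of_succ i _ ih => rw [hT, ih, num_ap, Function.iterate_fixed (k_ap k k)]

theorem exists_searches {r : ℕ → ℕ → ℕ} (hr : Primrec₂ r) :
    ∃ e : Term 0, ∀ (C : Type) [CombinatoryAlgebra C] n, Searches (val C e ⬝ num C n) (r n) := by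
  obtain ⟨e, he⟩ := Representable.of_primrec (Nat.Primrec'.prim_iff₂.2 hr)
  refine ⟨(↑e ⬝ (↑pair ⬝ var 2 ⬝ (↑pair ⬝ var 0 ⬝ K)) ⬝ (K ⬝ K) ⬝
    (var 1 ⬝ var 1 ⬝ (↑succ ⬝ var 0)) : Term 3).lam.lam.lam, fun C _ n x t => ?_⟩
  have val_e_ap : val C e ⬝ (val C pair ⬝ num C n ⬝ (val C pair ⬝ num C t ⬝ k)) = num C (r n t) :=
    he C (n ::ᵥ t ::ᵥ .nil)
  rw [val]
  simp [val_e_ap, num]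

/-! ### An extensional filter model of the `λ`-calculus -/

/-- Intersection types: `arrow [a₁, …, aₙ] b` stands for `a₁ ∧ … ∧ aₙ → b`. The atom is to be
identified with `arrow [] atom`, which makes the model extensional. -/
inductive Ty : Type
  | atom : Ty
  | arrow : List Ty → Ty → Ty

namespace Ty

/-- The list of types on the left of the arrow. -/
def dom : Ty → List Ty
  | atom => []
  | arrow l _ => l

/-- The type on the right of the arrow. -/
def cod : Ty → Ty
  | atom => atom
  | arrow _ a => a

theorem sizeOf_dom_le (a : Ty) : sizeOf a.dom ≤ sizeOf a := by
  cases a <;> simp only [dom, List.nil.sizeOf_spec, atom.sizeOf_spec, arrow.sizeOf_spec] <;> omega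

theorem sizeOf_cod_le (a : Ty) : sizeOf a.cod ≤ sizeOf a := by
  cases a <;> simp [cod]

theorem sizeOf_lt_of_mem_dom {a x : Ty} (h : x ∈ a.dom) : sizeOf x < sizeOf a :=
  (List.sizeOf_lt_of_mem h).trans_le a.sizeOf_dom_le

/-- The information order, the converse of subtyping: `Le a b` means that `b` is at least as
informative as `a`. -/
protected def Le (a : Ty) : Ty → Prop
  | atom => True
  | arrow l b => (∀ x ∈ l, ∃ y, ∃ _ : y ∈ a.dom, Ty.Le x y) ∧ Ty.Le a.cod b
termination_by b => sizeOf a + sizeOf b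
decreasing_by
  · have := List.sizeOf_lt_of_mem ‹x ∈ l›
    have := sizeOf_lt_of_mem_dom ‹y ∈ a.dom›
    rw [arrow.sizeOf_spec]
    omega
  · have := a.sizeOf_cod_le
    rw [arrow.sizeOf_spec]
    omega

theorem le_iff_dom_cod {a b : Ty} :
    a.Le b ↔ (∀ x ∈ b.dom, ∃ y ∈ a.dom, x.Le y) ∧ a.cod.Le b.cod := by
  cases b with
  | atom => simp [dom, cod, Ty.Le]
  | arrow l b => rw [Ty.Le]; simp only [dom, cod, exists_prop]

theorem Le.refl : ∀ a : Ty, a.Le a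
  | atom => by simp only [Ty.Le]
  | arrow l a => by
    rw [Ty.Le]
    exact ⟨fun x hx => ⟨x, hx, Le.refl x⟩, Le.refl a⟩

theorem Le.trans {a b : Ty} : ∀ {c : Ty}, a.Le b → b.Le c → a.Le c
  | atom, _, _ => by simp only [Ty.Le]
  | arrow l c, hab, hbc => by
    rw [le_iff_dom_cod] at hab
    rw [Ty.Le] at hbc ⊢
    exact ⟨fun x hx =>
      have ⟨y, hy, hxy⟩ := hbc.1 x hx
      have ⟨z, hz, hyz⟩ := hab.1 y hy
      ⟨z, hz, hxy.trans hyz⟩, hab.2.trans hbc.2⟩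
termination_by c => sizeOf a + sizeOf b + sizeOf c
decreasing_by
  · have := sizeOf_lt_of_mem_dom hz
    have := sizeOf_lt_of_mem_dom hy
    have := List.sizeOf_lt_of_mem hx
    rw [arrow.sizeOf_spec]
    omega
  · have := a.sizeOf_cod_le
    have := b.sizeOf_cod_le
    rw [arrow.sizeOf_spec]
    omega

instance : Preorder Ty where
  le := Ty.Le
  le_refl := Le.refl
  le_trans _ _ _ := Le.trans

/-- The filter generated by a list of types, that is, by their intersection. It is a lower set
because the information order is the converse of subtyping. -/
def filterOf (l : List Ty) : LowerSet Ty := lowerClosure {x | x ∈ l}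

theorem filterOf_le {l : List Ty} {X : LowerSet Ty} : filterOf l ≤ X ↔ ∀ x ∈ l, x ∈ X :=
  lowerClosure_le

theorem filterOf_append_le {l m : List Ty} {X : LowerSet Ty} :
    filterOf (l ++ m) ≤ X ↔ filterOf l ≤ X ∧ filterOf m ≤ X := by
  simp only [filterOf_le, List.mem_append, or_imp, forall_and]

theorem le_iff {a b : Ty} : a ≤ b ↔ filterOf b.dom ≤ filterOf a.dom ∧ a.cod ≤ b.cod :=
  le_iff_dom_cod.trans (and_congr_left fun _ => (filterOf_le (X := filterOf a.dom)).symm)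

theorem arrow_le_iff {l : List Ty} {a b : Ty} :
    arrow l a ≤ b ↔ filterOf b.dom ≤ filterOf l ∧ a ≤ b.cod := le_iff

theorem le_arrow_iff {l : List Ty} {a b : Ty} :
    a ≤ arrow l b ↔ filterOf l ≤ filterOf a.dom ∧ a.cod ≤ b := le_iff

theorem filterOf_le_iSup_iff {ι : Type*} [Nonempty ι] {Y : ι → LowerSet Ty}
    (hY : Directed (· ≤ ·) Y) {l : List Ty} : filterOf l ≤ ⨆ i, Y i ↔ ∃ i, filterOf l ≤ Y i := by
  refine ⟨fun h => ?_, fun ⟨i, hi⟩ => hi.trans (le_iSup Y i)⟩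
  induction l with
  | nil => exact ⟨Classical.arbitrary ι, by simp [filterOf_le]⟩
  | cons a l ih =>
    rw [filterOf_le, List.forall_mem_cons, LowerSet.mem_iSup_iff, ← filterOf_le] at h
    obtain ⟨i, hi⟩ := h.1
    obtain ⟨j, hj⟩ := ih h.2
    obtain ⟨m, him, hjm⟩ := hY i j
    exact ⟨m, filterOf_le.2 (List.forall_mem_cons.2 ⟨him hi, filterOf_le.1 (hj.trans hjm)⟩)⟩

theorem directed_filterOf (X : LowerSet Ty) :
    Directed (· ≤ ·) fun l : {l : List Ty // filterOf l ≤ X} => filterOf l := fun l m =>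
  ⟨⟨l ++ m, filterOf_append_le.2 ⟨l.2, m.2⟩⟩, filterOf_append_le.1 le_rfl⟩

theorem iSup_filterOf (X : LowerSet Ty) : ⨆ l : {l : List Ty // filterOf l ≤ X}, filterOf l.1 = X :=
  le_antisymm (iSup_le fun l => l.2) fun x hx =>
    LowerSet.mem_iSup_iff.2 ⟨⟨[x], by simpa [filterOf_le]⟩, x, by simp⟩

end Ty

open Ty (filterOf filterOf_le)

/-- The elements of the filter model are the filters of types: the least one is the denotation of
the terms without a type. Applying the filter `X` to `Y` is the elimination rule for arrows. -/
instance : ApplicativeStructure (LowerSet Ty) where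
  ap X Y :=
    { carrier := {a | ∃ l, filterOf l ≤ Y ∧ Ty.arrow l a ∈ X}
      lower' := fun _ _ hba ⟨l, hl, ha⟩ => ⟨l, hl, X.lower (Ty.le_arrow_iff.2 ⟨le_rfl, hba⟩) ha⟩ }

section FilterModel

variable {X X' Y Y' : LowerSet Ty}

theorem ap_mono (hX : X ≤ X') (hY : Y ≤ Y') : X ⬝ Y ≤ X' ⬝ Y' := fun _ ⟨l, hl, ha⟩ =>
  ⟨l, hl.trans hY, hX ha⟩

theorem cod_mem_ap {s : Ty} (hs : s ∈ X) (hY : filterOf s.dom ≤ Y) : s.cod ∈ X ⬝ Y :=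
  ⟨s.dom, hY, X.lower (Ty.arrow_le_iff.2 ⟨le_rfl, le_rfl⟩) hs⟩

/-- The filter of a function, given by the introduction rule for arrows. -/
def abstr (F : LowerSet Ty →o LowerSet Ty) : LowerSet Ty where
  carrier := {s | s.cod ∈ F (filterOf s.dom)}
  lower' _ _ h hs := (F _).lower (Ty.le_iff.1 h).2 (F.monotone (Ty.le_iff.1 h).1 hs)

theorem abstr_ap {F : LowerSet Ty →o LowerSet Ty}
    (hF : ∀ a, a ∈ F Y → ∃ l, filterOf l ≤ Y ∧ a ∈ F (filterOf l)) : abstr F ⬝ Y = F Y :=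
  le_antisymm (fun _ ⟨_, hl, ha⟩ => F.monotone hl ha) hF

theorem abstr_ap_self (X : LowerSet Ty) : abstr ⟨(X ⬝ ·), fun _ _ h => ap_mono le_rfl h⟩ = X :=
  le_antisymm (fun _ ⟨_, hl, hs⟩ => X.lower (Ty.le_arrow_iff.2 ⟨hl, le_rfl⟩) hs)
    fun _ hs => cod_mem_ap hs le_rfl

end FilterModel

/-- The sequence `ρ 0, …, ρ (k - 1), x, ρ k, ρ (k + 1), …`. -/
def insertAt {β : Type*} (k : ℕ) (x : β) (ρ : ℕ → β) : ℕ → β :=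
  fun n => if n = k then x else if k < n then ρ (n - 1) else ρ n

theorem insertAt_zero_insertAt {β : Type*} (k : ℕ) (x y : β) (ρ : ℕ → β) :
    insertAt 0 y (insertAt k x ρ) = insertAt (k + 1) x (insertAt 0 y ρ) := by
  funext n
  rcases n with _ | _ | n
  · simp [insertAt]
  · cases k <;> simp [insertAt]
  · grind [insertAt]

theorem insertAt_mono {β : Type*} [Preorder β] (k : ℕ) {x y : β} {ρ σ : ℕ → β} (hxy : x ≤ y)
    (hρσ : ρ ≤ σ) : insertAt k x ρ ≤ insertAt k y σ := fun n => by
  unfold insertAt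
  split_ifs
  exacts [hxy, hρσ _, hρσ _]

theorem insertAt_iSup {ι β : Type*} [CompleteLattice β] (k : ℕ) (x : ι → β) (ρ : ι → ℕ → β) :
    insertAt k (⨆ i, x i) (⨆ i, ρ i) = ⨆ i, insertAt k (x i) (ρ i) := by
  funext n
  simp only [insertAt, iSup_apply]
  split_ifs <;> rfl

namespace Lam

/-- The denotation of a `λ`-term in the filter model, under an assignment of its variables. -/
def interp : Lam → (ℕ → LowerSet Ty) →o LowerSet Ty
  | var n => Pi.evalOrderHom n
  | app M N => ⟨fun ρ => interp M ρ ⬝ interp N ρ, fun _ _ h =>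
      ap_mono ((interp M).monotone h) ((interp N).monotone h)⟩
  | abs M =>
      ⟨fun ρ => abstr ⟨fun Y => interp M (insertAt 0 Y ρ), fun _ _ h =>
        (interp M).monotone (insertAt_mono 0 h le_rfl)⟩, fun _ _ h s hs =>
        (interp M).monotone (insertAt_mono 0 (le_refl (filterOf s.dom)) h) hs⟩

theorem interp_var (n : ℕ) (ρ : ℕ → LowerSet Ty) : interp (var n) ρ = ρ n := rfl

theorem exists_mem_interp {ι : Type*} [Nonempty ι] {ρ : ι → ℕ → LowerSet Ty}
    (hρ : Directed (· ≤ ·) ρ) {M : Lam} {a : Ty} (ha : a ∈ interp M (⨆ i, ρ i)) :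
    ∃ i, a ∈ interp M (ρ i) := by
  induction M generalizing ι a with
  | var n =>
    change a ∈ (⨆ i, ρ i) n at ha
    rwa [iSup_apply, LowerSet.mem_iSup_iff] at ha
  | app M N ihM ihN =>
    obtain ⟨l, hl, hM⟩ := ha
    obtain ⟨i, hi⟩ := ihM hρ hM
    have hN : filterOf l ≤ ⨆ i, interp N (ρ i) :=
      filterOf_le.2 fun x hx => LowerSet.mem_iSup_iff.2 (ihN hρ (filterOf_le.1 hl x hx))
    obtain ⟨j, hj⟩ := (Ty.filterOf_le_iSup_iff (hρ.mono_comp _ (interp N).monotone)).1 hN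
    obtain ⟨m, him, hjm⟩ := hρ i j
    exact ⟨m, l, hj.trans ((interp N).monotone hjm), (interp M).monotone him hi⟩
  | abs M ih =>
    have h : insertAt 0 (filterOf a.dom) (⨆ i, ρ i) = ⨆ i, insertAt 0 (filterOf a.dom) (ρ i) := by
      rw [← insertAt_iSup, iSup_const]
    exact ih (fun i j => (hρ i j).imp fun m hm =>
      ⟨insertAt_mono 0 le_rfl hm.1, insertAt_mono 0 le_rfl hm.2⟩) (h ▸ ha)

theorem interp_abs_congr {M N : Lam} {ρ σ : ℕ → LowerSet Ty}
    (h : ∀ X, interp M (insertAt 0 X ρ) = interp N (insertAt 0 X σ)) :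
    interp (abs M) ρ = interp (abs N) σ :=
  congrArg abstr (OrderHom.ext _ _ (funext h))

theorem interp_abs_ap (M : Lam) (ρ : ℕ → LowerSet Ty) (X : LowerSet Ty) :
    interp (abs M) ρ ⬝ X = interp M (insertAt 0 X ρ) := by
  refine abstr_ap fun a (ha : a ∈ interp M (insertAt 0 X ρ)) => ?_
  have : Nonempty {l // filterOf l ≤ X} := ⟨[], by simp [filterOf_le]⟩
  have insertAt_eq : insertAt 0 X ρ = ⨆ l : {l // filterOf l ≤ X}, insertAt 0 (filterOf l.1) ρ := by
    rw [← insertAt_iSup, Ty.iSup_filterOf, iSup_const]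
  obtain ⟨l, hl⟩ := exists_mem_interp ((Ty.directed_filterOf X).mono_comp _
    fun _ _ h => insertAt_mono 0 h le_rfl) (insertAt_eq ▸ ha)
  exact ⟨l, l.2, hl⟩

theorem interp_lift (M : Lam) (k : ℕ) (X : LowerSet Ty) (ρ : ℕ → LowerSet Ty) :
    interp (M.lift k) (insertAt k X ρ) = interp M ρ := by
  induction M generalizing k X ρ with
  | var n => grind [lift, interp_var, insertAt]
  | app M N ihM ihN => exact congrArg₂ (· ⬝ ·) (ihM k X ρ) (ihN k X ρ)
  | abs M ih => exact interp_abs_congr fun Y => by rw [insertAt_zero_insertAt, ih]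

theorem interp_subst (M : Lam) (k : ℕ) (N : Lam) (ρ : ℕ → LowerSet Ty) :
    interp (M.subst k N) ρ = interp M (insertAt k (interp N ρ) ρ) := by
  induction M generalizing k N ρ with
  | var n => grind [subst, interp_var, insertAt]
  | app M M' ihM ihM' => exact congrArg₂ (· ⬝ ·) (ihM k N ρ) (ihM' k N ρ)
  | abs M ih =>
    exact interp_abs_congr fun Y => by rw [ih, interp_lift, insertAt_zero_insertAt]

end Lam

open Lam

theorem BetaEtaEq.interp_eq {M N : Lam} (h : BetaEtaEq M N) : interp M = interp N := by
  induction h with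
  | beta M N => exact OrderHom.ext _ _ (funext fun ρ =>
      (interp_abs_ap M ρ _).trans (interp_subst M 0 N ρ).symm)
  | eta M =>
    refine OrderHom.ext _ _ (funext fun ρ => ?_)
    refine Eq.trans ?_ (abstr_ap_self (interp M ρ))
    simp only [interp, OrderHom.coe_mk, interp_lift]
    rfl
  | refl M => rfl
  | symm _ ih => exact ih.symm
  | trans _ _ ih₁ ih₂ => exact ih₁.trans ih₂
  | appCongr _ _ ih₁ ih₂ => simp only [interp, ih₁, ih₂]
  | absCongr _ ih => simp only [interp, ih]

theorem BetaEq.betaEtaEq {M N : Lam} (h : BetaEq M N) : BetaEtaEq M N := by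
  induction h with
  | beta M N => exact .beta M N
  | refl M => exact .refl M
  | symm _ ih => exact ih.symm
  | trans _ _ ih₁ ih₂ => exact ih₁.trans ih₂
  | appCongr _ _ ih₁ ih₂ => exact ih₁.appCongr ih₂
  | absCongr _ ih => exact ih.absCongr

namespace Lam

theorem lift_lift (M : Lam) {i k : ℕ} (h : i ≤ k) :
    (M.lift i).lift (k + 1) = (M.lift k).lift i := by
  induction M generalizing i k with
  | var n => grind [lift]
  | app M N ihM ihN => simp only [lift, ihM h, ihN h]
  | abs M ih => simp only [lift, ih (Nat.succ_le_succ h)]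

theorem lift_subst (M : Lam) (k : ℕ) (N : Lam) : (M.lift k).subst k N = M := by
  induction M generalizing k N with
  | var n => grind [lift, subst]
  | app M N ihM ihN => simp only [lift, subst, ihM, ihN]
  | abs M ih => simp only [lift, subst, ih]

/-- The combinator `K = λx y. x`. -/
def combK : Lam := abs (abs (var 1))

/-- The combinator `S = λx y z. x z (y z)`. -/
def combS : Lam := abs (abs (abs (app (app (var 2) (var 0)) (app (var 1) (var 0)))))

theorem betaEq_combK (M N : Lam) : BetaEq (app (app combK M) N) M := by
  have app_combK : BetaEq (app combK M) (abs (M.lift 0)) := .beta _ _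
  have app_abs_lift : BetaEq (app (abs (M.lift 0)) N) M := by
    simpa only [lift_subst] using BetaEq.beta (M.lift 0) N
  exact (app_combK.appCongr (.refl N)).trans app_abs_lift

theorem betaEq_combS (M N P : Lam) :
    BetaEq (app (app (app combS M) N) P) (app (app M P) (app N P)) := by
  let body₁ := abs (app (app ((M.lift 0).lift 0) (var 0)) (app (var 1) (var 0)))
  let body₂ := app (app (M.lift 0) (var 0)) (app (N.lift 0) (var 0))
  have app_combS : BetaEq (app combS M) (abs body₁) := .beta _ _
  have app_body₁ : BetaEq (app (abs body₁) N) (abs body₂) := by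
    have h := BetaEq.beta body₁ N
    simpa [body₁, body₂, subst, ← lift_lift M le_rfl, lift_subst] using h
  have app_body₂ : BetaEq (app (abs body₂) P) (app (app M P) (app N P)) := by
    have h := BetaEq.beta body₂ P
    simpa [body₂, subst, lift_subst] using h
  exact (((app_combS.appCongr (.refl N)).trans app_body₁).appCongr (.refl P)).trans app_body₂

end Lam

instance : CombinatoryAlgebra LamBeta where
  ap := Quotient.map₂ Lam.app fun _ _ h₁ _ _ h₂ => BetaEq.appCongr h₁ h₂
  s := Quotient.mk lamBetaSetoid combS
  k := Quotient.mk lamBetaSetoid combK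
  k_ap a b := Quotient.inductionOn₂ a b fun M N => Quotient.sound (betaEq_combK M N)
  s_ap a b c := Quotient.inductionOn₃ a b c fun M N P => Quotient.sound (betaEq_combS M N P)

instance : CombinatoryAlgebra LamBetaEta where
  ap := Quotient.map₂ Lam.app fun _ _ h₁ _ _ h₂ => BetaEtaEq.appCongr h₁ h₂
  s := Quotient.mk lamBetaEtaSetoid combS
  k := Quotient.mk lamBetaEtaSetoid combK
  k_ap a b := Quotient.inductionOn₂ a b fun M N => Quotient.sound (betaEq_combK M N).betaEtaEq
  s_ap a b c :=
    Quotient.inductionOn₃ a b c fun M N P => Quotient.sound (betaEq_combS M N P).betaEtaEq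

instance : CombinatoryAlgebra (LowerSet Ty) where
  s := interp combS ⊥
  k := interp combK ⊥
  k_ap X Y := by
    rw [combK, interp_abs_ap, interp_abs_ap]
    rfl
  s_ap X Y Z := by
    rw [combS, interp_abs_ap, interp_abs_ap, interp_abs_ap]
    rfl

/-- The interpretation of `λ` in the filter model. -/
def interpBeta : CombinatoryAlgebra.Hom LamBeta (LowerSet Ty) where
  toFun := Quotient.lift (fun M => interp M ⊥) fun _ _ h => congrArg (· ⊥) h.betaEtaEq.interp_eq
  map_ap a b := Quotient.inductionOn₂ a b fun _ _ => rfl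
  map_s := rfl
  map_k := rfl

/-- The interpretation of `λη` in the filter model. -/
def interpBetaEta : CombinatoryAlgebra.Hom LamBetaEta (LowerSet Ty) where
  toFun := Quotient.lift (fun M => interp M ⊥) fun _ _ h => congrArg (· ⊥) h.interp_eq
  map_ap a b := Quotient.inductionOn₂ a b fun _ _ => rfl
  map_s := rfl
  map_k := rfl

/-! ### Divergent self-applications -/

/-- By induction on `l`: the elements of `filterOf l ⬝ filterOf l` arise from some `s ∈ l` and lie
in `X ⬝ filterOf s.dom`, where `s.dom` is smaller than `l` and again approximates `X`. -/
theorem self_ap_filterOf_le {X P : LowerSet Ty} (hP : ∀ Y, Y ⬝ Y ≤ P → X ⬝ Y ≤ P) (l : List Ty)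
    (hl : filterOf l ≤ X) : filterOf l ⬝ filterOf l ≤ P := by
  rintro a ⟨m, hml, s, hsl, has⟩
  obtain ⟨hdom, hcod⟩ := Ty.arrow_le_iff.1 has
  have hs : s ∈ X := filterOf_le.1 hl s hsl
  have := s.sizeOf_dom_le.trans_lt (List.sizeOf_lt_of_mem hsl)
  exact P.lower hcod (hP _ (self_ap_filterOf_le hP s.dom (hdom.trans (hml.trans hl)))
    (cod_mem_ap hs le_rfl))
termination_by sizeOf l

theorem self_ap_le {X P : LowerSet Ty} (hP : ∀ Y, Y ⬝ Y ≤ P → X ⬝ Y ≤ P) : X ⬝ X ≤ P :=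
  fun _ ⟨l, hl, ha⟩ => hP _ (self_ap_filterOf_le hP l hl) ⟨l, le_rfl, ha⟩

/-- The largest filter whose application to each `Y t` is empty. -/
def annihilator {ι : Type*} (Y : ι → LowerSet Ty) : LowerSet Ty where
  carrier := {s | ∀ t, ¬ filterOf s.dom ≤ Y t}
  lower' _ _ h hs t ht := hs t ((Ty.le_iff.1 h).1.trans ht)

theorem le_annihilator_iff {ι : Type*} {X : LowerSet Ty} {Y : ι → LowerSet Ty} :
    X ≤ annihilator Y ↔ ∀ t, X ⬝ Y t = ⊥ := by
  refine ⟨fun h t => ?_, fun h s hs t ht => ?_⟩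
  · exact eq_bot_iff.2 fun a ⟨l, hl, ha⟩ => h ha t hl
  · exact (h t).le (cod_mem_ap hs ht)

theorem Searches.self_ap_num_eq_bot {T : LowerSet Ty} {g : ℕ → ℕ} (hT : Searches T g)
    (hg : ∀ t, g t = 0) : T ⬝ T ⬝ num _ 0 = ⊥ := by
  refine le_annihilator_iff.1 (self_ap_le fun Y hY => le_annihilator_iff.2 fun t => ?_) 0
  rw [hT, hg, num, val_zero_ap]
  exact le_annihilator_iff.1 hY (t + 1)

theorem k_ne_bot : (k : LowerSet Ty) ≠ ⊥ := by
  intro h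
  have top_eq : (⊤ : LowerSet Ty) = ⊥ ⬝ ⊤ ⬝ ⊤ := by rw [← h, k_ap]
  obtain ⟨l, -, m, -, hm⟩ := top_eq.le (show Ty.atom ∈ ⊤ from trivial)
  exact hm

/-! ### Representing computably enumerable predicates -/

open Nat.Partrec (Code)

theorem exists_primrec_ne_zero {p : ℕ → Prop} (hp : REPred p) :
    ∃ r : ℕ → ℕ → ℕ, Primrec₂ r ∧ ∀ n, p n ↔ ∃ t, r n t ≠ 0 := by
  obtain ⟨c, hc⟩ := Code.exists_code.1 (Partrec.nat_iff.1 (hp.map (Computable.const 0).to₂))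
  have p_iff (n : ℕ) : p n ↔ ∃ t, (c.evaln t n).isSome.toNat ≠ 0 :=
    calc p n ↔ ∃ y, y ∈ c.eval n := by simp [hc]
      _ ↔ ∃ t y, y ∈ c.evaln t n := by simpa only [Code.evaln_complete] using exists_comm
      _ ↔ ∃ t, (c.evaln t n).isSome.toNat ≠ 0 := by simp [Option.ne_none_iff_exists']
  refine ⟨fun n t => (c.evaln t n).isSome.toNat, ?_, p_iff⟩
  have evaln_primrec : Primrec₂ fun n t => (c.evaln t n).isSome :=
    Primrec.option_isSome.comp
      (Code.primrec_evaln.comp ((Primrec.snd.pair (Primrec.const c)).pair Primrec.fst))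
  exact (Primrec.dom_finite Bool.toNat).comp evaln_primrec

theorem exists_val_ap_num_eq_k_iff {p : ℕ → Prop} (hp : REPred p) :
    ∃ e : Term 0, ∀ (C : Type) [CombinatoryAlgebra C] (_ : CombinatoryAlgebra.Hom C (LowerSet Ty))
      (n : ℕ), val C e ⬝ num C n = k ↔ p n := by
  obtain ⟨r, hr, hpr⟩ := exists_primrec_ne_zero hp
  obtain ⟨search, hsearch⟩ := exists_searches hr
  let e : Term 0 := (↑search ⬝ var 0 ⬝ (↑search ⬝ var 0) ⬝ ↑zero : Term 1).lam
  have val_e (C : Type) [CombinatoryAlgebra C] (n : ℕ) : val C e ⬝ num C n =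
      val C search ⬝ num C n ⬝ (val C search ⬝ num C n) ⬝ num C 0 := by
    rw [val]
    simp [e, num]
  refine ⟨e, fun C _ F n => ⟨fun h => ?_, fun h => ?_⟩⟩
  · by_contra hn
    have hr0 (t : ℕ) : r n t = 0 := by
      by_contra ht
      exact hn ((hpr n).2 ⟨t, ht⟩)
    refine k_ne_bot ?_
    calc k = F.toFun (val C e ⬝ num C n) := by rw [h, F.map_k]
      _ = val _ e ⬝ num _ n := by rw [F.map_ap, map_val, map_num]
      _ = ⊥ := by rw [val_e, (hsearch _ n).self_ap_num_eq_bot hr0]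
  · obtain ⟨t, ht⟩ := (hpr n).1 h
    rw [val_e, (hsearch C n).self_ap_num_eq_k ht]

/-! ### Computability with the empty oracle -/

/-- The code without an oracle that is equivalent to an oracle code for the oracle `chi ∅`. -/
def OCode.toCode : OCode → Code
  | zero | oracle => .zero
  | succ => .succ
  | left => .left
  | right => .right
  | pair c₁ c₂ => .pair c₁.toCode c₂.toCode
  | comp c₁ c₂ => .comp c₁.toCode c₂.toCode
  | prec c₁ c₂ => .prec c₁.toCode c₂.toCode
  | rfind' c => .rfind' c.toCode

theorem OCode.eval_toCode (c : OCode) : c.toCode.eval = evalo (chi ∅) c := by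
  induction c with
  | zero | succ | left | right => rfl
  | oracle =>
    funext n
    simp only [evalo, chi, Set.indicator_empty]
    rfl
  | pair c₁ c₂ ih₁ ih₂ | comp c₁ c₂ ih₁ ih₂ | prec c₁ c₂ ih₁ ih₂ =>
    simp only [toCode, Code.eval, evalo, ih₁, ih₂]
    rfl
  | rfind' c ih =>
    simp only [toCode, Code.eval, evalo, ih]
    rfl

/-- A code regarded as an oracle code that never queries its oracle. -/
def OCode.ofCode : Code → OCode
  | .zero => .zero
  | .succ => .succ
  | .left => .left
  | .right => .right
  | .pair c₁ c₂ => .pair (OCode.ofCode c₁) (OCode.ofCode c₂)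
  | .comp c₁ c₂ => .comp (OCode.ofCode c₁) (OCode.ofCode c₂)
  | .prec c₁ c₂ => .prec (OCode.ofCode c₁) (OCode.ofCode c₂)
  | .rfind' c => .rfind' (OCode.ofCode c)

theorem OCode.evalo_ofCode (O : ℕ →. ℕ) (c : Code) : evalo O (OCode.ofCode c) = c.eval := by
  induction c with
  | zero | succ | left | right => rfl
  | pair c₁ c₂ ih₁ ih₂ | comp c₁ c₂ ih₁ ih₂ | prec c₁ c₂ ih₁ ih₂ =>
    simp only [OCode.ofCode, Code.eval, evalo, ih₁, ih₂]
    rfl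
  | rfind' c ih =>
    simp only [OCode.ofCode, Code.eval, evalo, ih]
    rfl

theorem recursiveIn_chi_empty_iff {ψ : ℕ →. ℕ} : RecursiveIn (chi ∅) ψ ↔ Nat.Partrec ψ := by
  rw [Code.exists_code]
  exact ⟨fun ⟨c, hc⟩ => ⟨c.toCode, c.eval_toCode.trans hc⟩,
    fun ⟨c, hc⟩ => ⟨.ofCode c, (OCode.evalo_ofCode _ c).trans hc⟩⟩

theorem computableIn_empty_iff {d : ℕ → ℕ} : ComputableIn ∅ d ↔ Computable d :=
  recursiveIn_chi_empty_iff.trans Partrec.nat_iff.symm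

/-- The code numbered `l.length` by `OCode.ofNat`, given the list `l` of its predecessors. -/
def nextCode (l : List Code) : Code :=
  let m := l.length - 5
  let c₁ := l.getD (m / 4).unpair.1 .zero
  let c₂ := l.getD (m / 4).unpair.2 .zero
  if l.length < 5 then [.zero, .succ, .left, .right].getD l.length .zero
  else if m % 4 = 0 then .pair c₁ c₂
  else if m % 4 = 1 then .comp c₁ c₂
  else if m % 4 = 2 then .prec c₁ c₂
  else .rfind' c₁

theorem primrec_nextCode : Primrec nextCode := by
  have length_sub : Primrec fun l : List Code => l.length - 5 :=
    Primrec.nat_sub.comp .list_length (.const 5)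
  have unpair : Primrec fun l : List Code => ((l.length - 5) / 4).unpair :=
    Primrec.unpair.comp (Primrec.nat_div.comp length_sub (.const 4))
  have code₁ : Primrec fun l : List Code => l.getD ((l.length - 5) / 4).unpair.1 .zero :=
    (Primrec.list_getD _).comp .id (Primrec.fst.comp unpair)
  have code₂ : Primrec fun l : List Code => l.getD ((l.length - 5) / 4).unpair.2 .zero :=
    (Primrec.list_getD _).comp .id (Primrec.snd.comp unpair)
  have mod_eq (i : ℕ) : PrimrecPred fun l : List Code => (l.length - 5) % 4 = i :=
    Primrec.eq.comp (Primrec.nat_mod.comp length_sub (.const 4)) (.const i)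
  exact .ite (Primrec.nat_lt.comp .list_length (.const 5))
    ((Primrec.list_getD _).comp (.const _) .list_length)
    (.ite (mod_eq 0) (Code.primrec₂_pair.comp code₁ code₂)
      (.ite (mod_eq 1) (Code.primrec₂_comp.comp code₁ code₂)
        (.ite (mod_eq 2) (Code.primrec₂_prec.comp code₁ code₂) (Code.primrec_rfind'.comp code₁))))

theorem nextCode_map_range (n : ℕ) :
    nextCode ((List.range n).map fun m => (OCode.ofNat m).toCode) = (OCode.ofNat n).toCode := by
  match n with
  | 0 | 1 | 2 | 3 | 4 => simp [nextCode, OCode.ofNat, OCode.toCode]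
  | n + 5 =>
    have getD_eq {i : ℕ} (hi : i ≤ n / 4) :
        ((List.range (n + 5)).map fun m => (OCode.ofNat m).toCode).getD i .zero =
          (OCode.ofNat i).toCode := by
      have : i < n + 5 := by omega
      simp [this]
    have mod_cases : n % 4 = 0 ∨ n % 4 = 1 ∨ n % 4 = 2 ∨ n % 4 = 3 := by omega
    rw [OCode.ofNat]
    simp only [nextCode, List.length_map, List.length_range, Nat.add_sub_cancel,
      getD_eq (Nat.unpair_left_le _), getD_eq (Nat.unpair_right_le _)]
    rcases mod_cases with h | h | h | h <;> simp [h, OCode.toCode]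

theorem primrec_toCode_ofNat : Primrec fun n => (OCode.ofNat n).toCode := by
  have strong_rec : Primrec₂ fun (_ : Unit) n => (OCode.ofNat n).toCode :=
    Primrec.nat_strong_rec _ (g := fun _ l => some (nextCode l))
      (Primrec.option_some.comp (primrec_nextCode.comp .snd))
      fun _ n => congrArg some (nextCode_map_range n)
  exact strong_rec.comp (.const ()) .id

theorem rePred_khalt : REPred (· ∈ Khalt) := by
  have : Partrec fun n => (OCode.ofNat n).toCode.eval n :=
    Code.eval_part.comp primrec_toCode_ofNat.to_comp .id
  exact this.dom_re.of_eq fun n => by rw [OCode.eval_toCode]; rfl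

/-! ### Computably indexed families -/

/-- Sequences of elements whose indices in a partial numbering can be computed. -/
def ComputableFamily {α : Type*} (γ : ℕ →. α) (x : ℕ → α) : Prop :=
  ∃ d : ℕ → ℕ, Computable d ∧ ∀ n, x n ∈ γ (d n)

section ComputableFamily

variable {α : Type*} {app : α → α → Part α} {γ : ℕ →. α} {x y z : ℕ → α}

theorem IsNumbering.computableFamily_const (hγ : IsNumbering γ) (a : α) :
    ComputableFamily γ fun _ => a :=
  have ⟨i, hi⟩ := hγ a
  ⟨fun _ => i, .const i, fun _ => hi⟩

theorem EffValued.computableFamily_of_mem_app (h : EffValued ∅ app γ) (hx : ComputableFamily γ x)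
    (hy : ComputableFamily γ y) (hz : ∀ n, z n ∈ app (x n) (y n)) : ComputableFamily γ z := by
  obtain ⟨ψ, hψ, index⟩ := h
  obtain ⟨d, hd, hdx⟩ := hx
  obtain ⟨e, he, hey⟩ := hy
  choose j hj hjz using fun n => index _ _ _ _ _ (hdx n) (hey n) (hz n)
  have ψ_partrec : Partrec ψ := Partrec.nat_iff.2 (recursiveIn_chi_empty_iff.1 hψ)
  exact ⟨j, (ψ_partrec.comp (Primrec₂.natPair.to_comp.comp hd he)).of_eq_tot hj, hjz⟩

theorem EffValued.computableFamily_of_succ_mem_app (h : EffValued ∅ app γ) (hγ : IsNumbering γ)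
    {a : α} (hx : ∀ n, x (n + 1) ∈ app a (x n)) : ComputableFamily γ x := by
  obtain ⟨ψ, hψ, index⟩ := h
  obtain ⟨i, hi⟩ := hγ a
  obtain ⟨i₀, hi₀⟩ := hγ (x 0)
  have ψ_partrec : Partrec ψ := Partrec.nat_iff.2 (recursiveIn_chi_empty_iff.1 hψ)
  let D : ℕ →. ℕ := fun n => n.rec (Part.some i₀) fun _ IH => IH.bind fun j => ψ (Nat.pair i j)
  have D_partrec : Partrec D := Partrec.nat_rec .id (Partrec.some.comp (.const i₀)) <|
    (ψ_partrec.comp (Primrec₂.natPair.to_comp.comp (.const i) (.comp .snd .snd))).to₂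
  have exists_mem_D (n : ℕ) : ∃ j ∈ D n, x n ∈ γ j := by
    induction n with
    | zero => exact ⟨i₀, Part.mem_some _, hi₀⟩
    | succ n ih =>
      obtain ⟨j, hj, hjx⟩ := ih
      obtain ⟨j', hj', hjx'⟩ := index _ _ _ _ _ hi hjx (hx n)
      exact ⟨j', Part.mem_bind hj hj', hjx'⟩
  choose d hd hdx using exists_mem_D
  exact ⟨d, D_partrec.of_eq_tot hd, hdx⟩

end ComputableFamily

theorem stmt4_general {α : Type*} {app : α → α → Part α} {γ : ℕ →. α} (hγ : IsNumbering γ)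
    (heff : EffValued ∅ app γ) {C : Type} [CombinatoryAlgebra C]
    (F : CombinatoryAlgebra.Hom C (LowerSet Ty)) {f : C → α}
    (hf : IsPCAEmbedding (fun x y => Part.some (x ⬝ y)) app f) {p : ℕ → Prop} (hp : REPred p) :
    ∃ (a : α) (d : ℕ → ℕ), ComputableIn ∅ d ∧
      ∀ n, (γ (d n)).Dom ∧ (γ (d n) = Part.some a ↔ p n) := by
  obtain ⟨hinj, hap⟩ := hf
  obtain ⟨e, he⟩ := exists_val_ap_num_eq_k_iff hp
  have map_ap (x y : C) : f (x ⬝ y) ∈ app (f x) (f y) := hap x y _ (Part.mem_some _)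
  have num_family : ComputableFamily γ fun n => f (num C n) :=
    heff.computableFamily_of_succ_mem_app hγ fun n => map_ap _ _
  obtain ⟨d, hd, hγd⟩ := heff.computableFamily_of_mem_app
    (hγ.computableFamily_const (f (val C e))) num_family fun n => map_ap _ _
  refine ⟨f k, d, computableIn_empty_iff.2 hd, fun n => ?_⟩
  rw [Part.eq_some_iff.2 (hγd n), Part.some_inj, hinj.eq_iff]
  exact ⟨trivial, he C F n⟩

theorem stmt4 (α : Type*) (app : α → α → Part α) (hpca : IsPCA app)
    (γ : ℕ →. α) (hγ : IsNumbering γ) (heff : EffValued ∅ app γ)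
    (hf : (∃ f : LamBetaEta → α, IsPCAEmbedding lamBetaEtaApp app f) ∨
          (∃ f : LamBeta → α, IsPCAEmbedding lamBetaApp app f)) :
    ∃ (a : α) (d : ℕ → ℕ), ComputableIn ∅ d ∧
      ∀ n, (γ (d n)).Dom ∧ (γ (d n) = Part.some a ↔ n ∈ Khalt) :=
  hf.elim (fun ⟨_, hf⟩ => stmt4_general hγ heff interpBetaEta hf rePred_khalt)
    fun ⟨_, hf⟩ => stmt4_general hγ heff interpBeta hf rePred_khalt

end PCAEmb
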